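/- Let p be a prime number, let d ≥ 1, let S = ℤ_p[[T_1, …, T_d]] be the formal power series ring in d variables over the ring of p-adic integers ℤ_p, and let R = S[[X]] be the power series ring in one further variable over S (so that R is isomorphic to ℤ_p[[T_1, …, T_d, X]]). Let M be a finitely generated torsion R-module. If the quotient M/XM, regarded as an S-module via the natural inclusion S → R, is pseudo-null over S, then M is pseudo-null over R. -/

import Mathlib

/-!
The ring `S = ℤ_p⟦T₁, …, T_d⟧` is a unique factorization domain, so powers of relatively prime
elements of `S` are relatively prime. If `f` and `g` are relatively prime and kill `M / XM`, the
determinant trick applied to `f M ⊆ XM` and `g M ⊆ XM`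
(`exists_annihilator_constantCoeff_eq_pow`) produces annihilators `F` and `G` of `M` with
`F(0) = f ^ a` and `G(0) = g ^ b`. The constant coefficient of a common divisor of `F` and `G`
divides `f ^ a` and `g ^ b`, hence is a unit, and so the divisor is itself a unit.

Unique factorization (`uniqueFactorizationMonoid_mvPowerSeries_padicInt`) goes by induction on the
number of variables. By Kaplansky's criterion, a prime element is needed in every nonzero prime `P`.
Either `P` contains the prime element `p`, or it contains a series `f` that is nonzero modulo `p`.
A change of variables `Tᵢ ↦ Tᵢ + T₀ ^ cᵢ` with suitable `cᵢ` makes `f` nonzero modulo `p` on the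
`T₀`-axis (`exists_shearEquiv_coeff_ne_zero`). Weierstrass preparation then puts a distinguished
polynomial in `T₀` into `P`; one of its prime factors in the polynomial ring lies in `P` and
remains prime in the power series ring (`exists_prime_mem_of_map_residue_ne_zero`). The
completeness required by Weierstrass preparation comes from the compactness of `ℤ_p⟦T₁, …, Tₙ⟧`.
-/


/-- A module `M` over a commutative ring `Λ` is pseudo-null if it has two nonzero,
relatively prime annihilators. -/
def IsPseudoNull (Λ : Type*) [CommRing Λ] (M : Type*) [AddCommGroup M] [Module Λ M] : Prop :=
  ∃ f g : Λ, f ≠ 0 ∧ g ≠ 0 ∧ (∀ m : M, f • m = 0) ∧ (∀ m : M, g • m = 0) ∧ IsRelPrime f g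

/-- The `S`-module structure on `M/XM` obtained by restricting scalars along the
natural inclusion `S → S[[X]]`. -/
noncomputable instance instModuleQuotXSMul (S : Type*) [CommRing S]
    (M : Type*) [AddCommGroup M] [Module (PowerSeries S) M] :
    Module S (M ⧸ (Ideal.span {(PowerSeries.X : PowerSeries S)} •
      (⊤ : Submodule (PowerSeries S) M))) :=
  Module.compHom _ (algebraMap S (PowerSeries S))

/-! ### Compactness and completeness -/

/-- A Noetherian local ring carrying a compact Hausdorff ring topology is complete for its maximal
ideal: the ideals `𝔪 ^ k` are finitely generated, hence compact, so the nested cosets determined by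
a compatible sequence have a common point. Separatedness is Krull's intersection theorem. -/
theorem isAdicComplete_of_compactSpace (A : Type*) [CommRing A] [IsLocalRing A]
    [IsNoetherianRing A] [TopologicalSpace A] [IsTopologicalRing A] [CompactSpace A] [T2Space A] :
    IsAdicComplete (IsLocalRing.maximalIdeal A) A where
  prec' f hf := by
    set m := IsLocalRing.maximalIdeal A
    have hcl (k : ℕ) : IsClosed {x : A | x - f k ∈ m ^ k} :=
      (Ideal.isCompact_of_fg (IsNoetherian.noetherian (m ^ k))).isClosed.preimage
        (continuous_id.sub continuous_const)
    have hf' {a b : ℕ} (hab : a ≤ b) : f a - f b ∈ m ^ a := by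
      simpa [SModEq.sub_mem] using hf hab
    obtain ⟨L, hL⟩ := IsCompact.nonempty_iInter_of_sequence_nonempty_isCompact_isClosed
      (fun k : ℕ ↦ {x : A | x - f k ∈ m ^ k})
      (fun k x hx ↦ by
        have h1 := Ideal.pow_le_pow_right (I := m) (Nat.le_succ k) hx
        have h2 := hf' (Nat.le_succ k)
        have h3 := (m ^ k).sub_mem h1 h2
        simpa using h3)
      (fun k ↦ ⟨f k, by simp⟩) (hcl 0).isCompact hcl
    refine ⟨L, fun k ↦ ?_⟩
    have hk : L - f k ∈ m ^ k := Set.mem_iInter.1 hL k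
    rw [SModEq.sub_mem, ← neg_sub]
    simpa using (m ^ k).neg_mem hk

open scoped MvPowerSeries.WithPiTopology in
theorem isAdicComplete_mvPowerSeries_padicInt (p : ℕ) [Fact p.Prime] (σ : Type*) [Finite σ] :
    IsAdicComplete (IsLocalRing.maximalIdeal (MvPowerSeries σ ℤ_[p]))
      (MvPowerSeries σ ℤ_[p]) := by
  have : CompactSpace (MvPowerSeries σ ℤ_[p]) :=
    inferInstanceAs (CompactSpace ((σ →₀ ℕ) → ℤ_[p]))
  exact isAdicComplete_of_compactSpace _

/-! ### Prime factors of distinguished polynomials -/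

open Polynomial in
/-- A monic divisor of a distinguished polynomial is distinguished: modulo `𝔪` it is a monic divisor
of a power of `X`. -/
theorem isDistinguishedAt_of_dvd {A : Type*} [CommRing A] [IsLocalRing A] {g q : A[X]}
    (hg : g.IsDistinguishedAt (IsLocalRing.maximalIdeal A)) (hq : q.Monic) (hqg : q ∣ g) :
    q.IsDistinguishedAt (IsLocalRing.maximalIdeal A) := by
  have hgm : g.map (IsLocalRing.residue A) = X ^ g.natDegree :=
    hg.map_eq_X_pow
  have hd : q.map (IsLocalRing.residue A) ∣ X ^ g.natDegree :=
    hgm ▸ Polynomial.map_dvd _ hqg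
  obtain ⟨k, -, hk⟩ := (dvd_prime_pow Polynomial.prime_X _).1 hd
  have hk' : q.map (IsLocalRing.residue A) = X ^ k :=
    eq_of_monic_of_associated (hq.map _) (monic_X_pow k) hk
  have hdeg : q.natDegree = k := by
    rw [← hq.natDegree_map (IsLocalRing.residue A), hk', natDegree_X_pow]
  refine ⟨⟨fun {i} hi ↦ ?_⟩, hq⟩
  rw [← IsLocalRing.residue_eq_zero_iff, ← coeff_map, hk', coeff_X_pow, if_neg (by omega)]

open Polynomial in
/-- Over a complete local UFD `A`, a prime of `A⟦X⟧` containing a series that is nonzero modulo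
`𝔪` contains a prime element: by Weierstrass preparation it contains a distinguished polynomial,
hence a prime factor `q` of it in `A[X]`, and `A⟦X⟧ / (q) ≃ A[X] / (q)`. -/
theorem exists_prime_mem_of_map_residue_ne_zero {A : Type*} [CommRing A] [IsDomain A]
    [IsLocalRing A] [UniqueFactorizationMonoid A]
    [IsAdicComplete (IsLocalRing.maximalIdeal A) A] (P : Ideal (PowerSeries A)) (hP : P.IsPrime)
    (f : PowerSeries A) (hfP : f ∈ P) (hf : f.map (IsLocalRing.residue A) ≠ 0) :
    ∃ q ∈ P, Prime q := by
  obtain ⟨g, h, H⟩ := f.exists_isWeierstrassFactorization hf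
  have hgP : (g : PowerSeries A) ∈ P := by
    rw [H.eq_mul] at hfP
    exact (hP.mem_or_mem hfP).resolve_right fun hh ↦ hP.ne_top (P.eq_top_of_isUnit_mem hh H.isUnit)
  have hgd := H.isDistinguishedAt
  let Q : Ideal A[X] := P.comap Polynomial.coeToPowerSeries.ringHom
  have hQ : Q.IsPrime := Ideal.comap_isPrime _ _
  have hgQ : g ∈ Q := hgP
  obtain ⟨s, hs, hsg⟩ := UniqueFactorizationMonoid.exists_prime_factors g hgd.monic.ne_zero
  have hsQ : s.prod ∈ Q := Ideal.mem_of_dvd _ hsg.symm.dvd hgQ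
  obtain ⟨q, hqs, hqQ⟩ := (hQ.multiset_prod_mem_iff_exists_mem s).1 hsQ
  have hqg : q ∣ g := (Multiset.dvd_prod hqs).trans hsg.dvd
  obtain ⟨u, hu⟩ : IsUnit q.leadingCoeff :=
    hgd.monic.isUnit_leadingCoeff_of_dvd hqg
  -- The monic normalization of the prime factor `q`.
  let q' : A[X] := C (↑u⁻¹ : A) * q
  have hass : Associated q' q :=
    associated_unit_mul_left q _ (Polynomial.isUnit_C.2 (Units.isUnit u⁻¹))
  have hq' : Prime q' := hass.symm.prime (hs q hqs)
  have hmon : q'.Monic := by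
    rw [Monic, leadingCoeff_mul, leadingCoeff_C, ← hu, Units.inv_mul]
  have hdist := isDistinguishedAt_of_dvd hgd hmon (hass.dvd.trans hqg)
  have hq'Q : q' ∈ Q := Q.mul_mem_left _ hqQ
  refine ⟨(q' : PowerSeries A), hq'Q, ?_⟩
  have hne : (q' : PowerSeries A) ≠ 0 := by simpa using hq'.ne_zero
  rw [← Ideal.span_singleton_prime hne, ← Ideal.Quotient.isDomain_iff_prime]
  have : (Ideal.span {q'}).IsPrime := (Ideal.span_singleton_prime hq'.ne_zero).2 hq'
  have : IsDomain (A[X] ⧸ Ideal.span {q'}) := (Ideal.Quotient.isDomain_iff_prime _).2 this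
  exact hdist.algEquivQuotient.symm.toMulEquiv.isDomain

/-! ### Change of variables -/

/-- Some weight with positive entries, giving the first coordinate weight one, attains one of its
values at exactly one point of a given nonempty set of exponents. By induction: the point is chosen
in the slice where the last coordinate is minimal, and the last weight is taken so large that a
point of the same weight has to lie in that slice. -/
theorem exists_weight (n : ℕ) (s : Set (Fin (n + 1) → ℕ)) (hs : s.Nonempty) :
    ∃ c : Fin (n + 1) → ℕ, c 0 = 1 ∧ (∀ i, c i ≠ 0) ∧
      ∃ a ∈ s, ∀ b ∈ s, ∑ i, c i * b i = ∑ i, c i * a i → b = a := by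
  induction n with
  | zero =>
    obtain ⟨a, ha⟩ := hs
    refine ⟨1, rfl, by simp, a, ha, fun b _ h ↦ ?_⟩
    funext i
    rw [Fin.fin_one_eq_zero i]
    simpa using h
  | succ n ih =>
    obtain ⟨a₀, ha₀, hmin⟩ : ∃ a₀ ∈ s, ∀ b ∈ s, a₀ (Fin.last _) ≤ b (Fin.last _) :=
      exists_minimalFor_of_wellFoundedLT (· ∈ s) (fun b ↦ b (Fin.last _)) hs |>.imp
        fun a h ↦ ⟨h.1, fun b hb ↦ (le_total _ _).elim id fun h' ↦ h.2 hb h'⟩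
    set N := a₀ (Fin.last _)
    obtain ⟨c, hc0, hc, a, ha, huniq⟩ :=
      ih {t | (Fin.snoc t N : Fin (n + 2) → ℕ) ∈ s} ⟨Fin.init a₀, by simpa [N] using ha₀⟩
    refine ⟨Fin.snoc c (∑ i, c i * a i + 1), ?_, ?_, Fin.snoc a N, ha, fun b hb h ↦ ?_⟩
    · rw [← Fin.castSucc_zero, Fin.snoc_castSucc, hc0]
    · intro i
      refine Fin.lastCases ?_ (fun i ↦ ?_) i
      · simp
      · simpa using hc i
    · have hN := hmin b hb
      have hsum (v w : Fin (n + 2) → ℕ) : ∑ i, v i * w i =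
          ∑ i : Fin (n + 1), v i.castSucc * w i.castSucc + v (Fin.last _) * w (Fin.last _) :=
        Fin.sum_univ_castSucc _
      rw [hsum, hsum (Fin.snoc c _) (Fin.snoc a N)] at h
      simp only [Fin.snoc_castSucc, Fin.snoc_last] at h
      have hbN : b (Fin.last _) = N := by
        refine le_antisymm ?_ hN
        by_contra! hlt
        have := Nat.mul_le_mul_left (∑ i, c i * a i + 1) (Nat.succ_le_of_lt hlt)
        rw [Nat.mul_succ] at this
        omega
      have hb' : b = Fin.snoc (Fin.init b) N := by rw [← hbN, Fin.snoc_init_self]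
      rw [hbN] at h
      rw [hb'] at hb ⊢
      rw [huniq _ hb (Nat.add_right_cancel h)]

section Shear

open MvPowerSeries

variable {n : ℕ} {R : Type*} [CommRing R]

/-- The family `X₀, X₁ + r X₀ ^ c₁, …, Xₙ + r X₀ ^ cₙ` of power series. -/
noncomputable def shear (c : Fin n → ℕ) (r : R) : Fin (n + 1) → MvPowerSeries (Fin (n + 1)) R :=
  Fin.cons (X 0) fun i ↦ X i.succ + r • X 0 ^ c i

theorem hasSubst_shear (c : Fin n → ℕ) (hc : ∀ i, c i ≠ 0) (r : R) : HasSubst (shear c r) :=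
  hasSubst_of_constantCoeff_zero fun i ↦ by
    refine Fin.cases ?_ (fun i ↦ ?_) i
    · simp [shear]
    · simp [shear, hc i]

theorem substAlgHom_shear_comp (c : Fin n → ℕ) (hc : ∀ i, c i ≠ 0) (r : R) :
    (substAlgHom (R := R) (hasSubst_shear c hc r)).comp
      (substAlgHom (R := R) (hasSubst_shear c hc (-r))) = AlgHom.id R _ := by
  refine (substAlgHom_comp_substAlgHom (R := R) (hasSubst_shear c hc (-r))
    (hasSubst_shear c hc r)).trans ?_
  have h : (fun s ↦ substAlgHom (R := R) (hasSubst_shear c hc r) (shear c (-r) s)) = X := by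
    funext i
    refine Fin.cases ?_ (fun i ↦ ?_) i
    · exact substAlgHom_X _ 0
    · change substAlgHom (R := R) (hasSubst_shear c hc r) (X i.succ + (-r) • X 0 ^ c i) = _
      rw [map_add, map_smul, map_pow, substAlgHom_X, substAlgHom_X]
      change X i.succ + r • X 0 ^ c i + (-r) • X 0 ^ c i = _
      rw [neg_smul, add_neg_cancel_right]
  ext1 f
  rw [substAlgHom_apply, h, subst_self]
  rfl

/-- The automorphism `X₀ ↦ X₀`, `Xᵢ ↦ Xᵢ + X₀ ^ cᵢ` of the ring of power series. -/
noncomputable def shearEquiv (c : Fin n → ℕ) (hc : ∀ i, c i ≠ 0) :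
    MvPowerSeries (Fin (n + 1)) R ≃ₐ[R] MvPowerSeries (Fin (n + 1)) R :=
  AlgEquiv.ofAlgHom (substAlgHom (hasSubst_shear c hc 1)) (substAlgHom (hasSubst_shear c hc (-1)))
    (substAlgHom_shear_comp c hc 1) (by simpa using substAlgHom_shear_comp c hc (-1 : R))

/-- Restriction to the first coordinate axis, `f ↦ f(X, 0, …, 0)`. -/
noncomputable def axisHom (n : ℕ) (R : Type*) [CommRing R] :
    MvPowerSeries (Fin (n + 1)) R →+* PowerSeries R :=
  (PowerSeries.map constantCoeff).comp (finSuccEquiv R n).toRingEquiv.toRingHom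

theorem coeff_axisHom (f : MvPowerSeries (Fin (n + 1)) R) (m : ℕ) :
    PowerSeries.coeff m (axisHom n R f) = coeff (Finsupp.cons m 0) f := by
  simp only [axisHom, RingHom.comp_apply, PowerSeries.coeff_map]
  rw [← coeff_zero_eq_constantCoeff_apply]
  exact coeff_coeff_finSuccEquiv f

theorem axisHom_shear (c : Fin (n + 1) → ℕ) (hc0 : c 0 = 1) (i : Fin (n + 1)) :
    axisHom n R (shear (fun i ↦ c i.succ) 1 i) = PowerSeries.X ^ c i := by
  refine Fin.cases ?_ (fun i ↦ ?_) i
  · simp [axisHom, shear, hc0]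
  · simp [axisHom, shear]

/-- Under the change of variables with weights `c`, a monomial restricts on the first axis to `X`
raised to its weight. -/
theorem coeff_axis_prod_shear (c : Fin (n + 1) → ℕ) (hc0 : c 0 = 1) (d : Fin (n + 1) →₀ ℕ)
    (m : ℕ) :
    coeff (Finsupp.cons m 0) (d.prod fun i e ↦ shear (R := R) (fun i ↦ c i.succ) 1 i ^ e) =
      if m = ∑ i, c i * d i then 1 else 0 := by
  rw [← coeff_axisHom, Finsupp.prod_fintype _ _ (by simp), map_prod]
  simp only [map_pow, axisHom_shear c hc0, ← pow_mul, Finset.prod_pow_eq_pow_sum]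
  rw [PowerSeries.coeff_X_pow]

/-- A power series that is nonzero modulo the kernel of a homomorphism `φ` becomes, after a change
of variables, nonzero modulo `ker φ` on the first coordinate axis. -/
theorem exists_shearEquiv_coeff_ne_zero {k : Type*} [CommRing k] (φ : R →+* k)
    (f : MvPowerSeries (Fin (n + 1)) R) (hf : f.map φ ≠ 0) :
    ∃ (c : Fin n → ℕ) (hc : ∀ i, c i ≠ 0) (m : ℕ),
      φ (coeff (Finsupp.cons m 0) (shearEquiv c hc f)) ≠ 0 := by
  obtain ⟨d₀, hd₀⟩ : ∃ d, coeff d (f.map φ) ≠ 0 := by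
    by_contra! h
    exact hf (MvPowerSeries.ext fun d ↦ by simpa using h d)
  obtain ⟨c, hc0, hc, a, ha, huniq⟩ :=
    exists_weight n {t | φ (coeff (Finsupp.equivFunOnFinite.symm t) f) ≠ 0}
      ⟨d₀, by simpa using hd₀⟩
  have hs := hasSubst_shear (fun i ↦ c i.succ) (fun i ↦ hc i.succ) (1 : R)
  refine ⟨fun i ↦ c i.succ, fun i ↦ hc i.succ, ∑ i, c i * a i, ?_⟩
  have h1 : shearEquiv (fun i ↦ c i.succ) (fun i ↦ hc i.succ) f =
    subst (shear (fun i ↦ c i.succ) 1) f := substAlgHom_apply hs f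
  rw [h1, coeff_subst hs]
  have hfin := coeff_subst_finite hs f (Finsupp.cons (∑ i, c i * a i) 0)
  change φ.toAddMonoidHom _ ≠ 0
  rw [AddMonoidHom.map_finsum _ hfin,
    finsum_eq_single _ (Finsupp.equivFunOnFinite.symm a)]
  · rw [coeff_axis_prod_shear c hc0]
    simpa using ha
  · intro d hd
    rw [coeff_axis_prod_shear c hc0]
    split_ifs with hw
    · have : φ (coeff d f) = 0 := by
        by_contra hne
        refine hd ?_
        have := huniq d (by simpa using hne) hw.symm
        rw [← this]
        simp
      simpa using this
    · simp

end Shear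

/-! ### Unique factorization -/

theorem map_toZMod_eq_zero_iff (p : ℕ) [Fact p.Prime] {σ : Type*} (f : MvPowerSeries σ ℤ_[p]) :
    f.map PadicInt.toZMod = 0 ↔ MvPowerSeries.C (p : ℤ_[p]) ∣ f := by
  constructor
  · intro h
    have h' (d : σ →₀ ℕ) : (p : ℤ_[p]) ∣ MvPowerSeries.coeff d f := by
      have : MvPowerSeries.coeff d f ∈ RingHom.ker (PadicInt.toZMod (p := p)) := by
        simpa using congr(MvPowerSeries.coeff d $h)
      rwa [PadicInt.ker_toZMod, PadicInt.maximalIdeal_eq_span_p, Ideal.mem_span_singleton] at this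
    choose g hg using h'
    let G : MvPowerSeries σ ℤ_[p] := g
    exact ⟨G, MvPowerSeries.ext fun d ↦ (hg d).trans (MvPowerSeries.coeff_C_mul d G _).symm⟩
  · rintro ⟨g, rfl⟩
    rw [map_mul, MvPowerSeries.map_C, map_natCast, ZMod.natCast_self, map_zero, zero_mul]

theorem prime_C_p (p : ℕ) [Fact p.Prime] (σ : Type*) :
    Prime (MvPowerSeries.C (p : ℤ_[p]) : MvPowerSeries σ ℤ_[p]) := by
  refine ⟨?_, ?_, fun a b h ↦ ?_⟩
  · intro h
    have := congr(MvPowerSeries.constantCoeff $h)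
    simp [(Fact.out : p.Prime).ne_zero] at this
  · intro h
    have := h.map (MvPowerSeries.constantCoeff (σ := σ) (R := ℤ_[p]))
    rw [MvPowerSeries.constantCoeff_C] at this
    exact PadicInt.prime_p.not_isUnit this
  · simpa only [← map_toZMod_eq_zero_iff, map_mul, mul_eq_zero] using h

/-- `ℤ_p⟦T₁, …, Tₙ⟧` is a unique factorization domain. By Kaplansky's criterion it suffices to find
a prime element in every nonzero prime `P`. If `p ∉ P`, removing powers of `p` produces an element
of `P` that is nonzero modulo `p`; after a change of variables Weierstrass preparation applies. -/
theorem uniqueFactorizationMonoid_mvPowerSeries_padicInt (p : ℕ) [Fact p.Prime] (n : ℕ) :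
    UniqueFactorizationMonoid (MvPowerSeries (Fin n) ℤ_[p]) := by
  induction n with
  | zero =>
    exact (MvPowerSeries.isEmptyEquiv (Fin 0) ℤ_[p]).symm.toMulEquiv.uniqueFactorizationMonoid
      inferInstance
  | succ n ih =>
    have : IsDomain (MvPowerSeries (Fin n) ℤ_[p]) := NoZeroDivisors.to_isDomain _
    have : IsDomain (MvPowerSeries (Fin (n + 1)) ℤ_[p]) := NoZeroDivisors.to_isDomain _
    refine UniqueFactorizationMonoid.iff_exists_prime_mem_of_isPrime.2 fun P hP0 hP ↦ ?_
    have hpp := prime_C_p p (Fin (n + 1))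
    by_cases hpP : MvPowerSeries.C (p : ℤ_[p]) ∈ P
    · exact ⟨_, hpP, hpp⟩
    obtain ⟨f, hfP, hf0⟩ := Submodule.exists_mem_ne_zero_of_ne_bot hP0
    obtain ⟨g, hfg, hg⟩ :=
      (FiniteMultiplicity.of_not_isUnit hpp.not_isUnit hf0).exists_eq_pow_mul_and_not_dvd
    have hgP : g ∈ P := by
      rw [hfg] at hfP
      exact (hP.mem_or_mem hfP).resolve_left fun h ↦ hpP (hP.mem_of_pow_mem _ h)
    obtain ⟨c, hc, m, hm⟩ := exists_shearEquiv_coeff_ne_zero PadicInt.toZMod g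
      (mt (map_toZMod_eq_zero_iff p g).1 hg)
    have := isAdicComplete_mvPowerSeries_padicInt p (Fin n)
    let e : MvPowerSeries (Fin (n + 1)) ℤ_[p] ≃+* PowerSeries (MvPowerSeries (Fin n) ℤ_[p]) :=
      ((shearEquiv c hc).trans (MvPowerSeries.finSuccEquiv ℤ_[p] n)).toRingEquiv
    obtain ⟨q, hqP, hq⟩ := exists_prime_mem_of_map_residue_ne_zero (P.comap e.symm)
      (Ideal.comap_isPrime _ _) (e g) (by simpa [Ideal.mem_comap] using hgP) (by
        intro h
        have h1 := congr(PowerSeries.coeff m $h)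
        rw [PowerSeries.coeff_map, map_zero, IsLocalRing.residue_eq_zero_iff,
          IsLocalRing.mem_maximalIdeal, mem_nonunits_iff,
          MvPowerSeries.isUnit_iff_constantCoeff] at h1
        rw [← MvPowerSeries.coeff_zero_eq_constantCoeff_apply] at h1
        have h2 : MvPowerSeries.coeff 0 (PowerSeries.coeff m (e g)) =
            MvPowerSeries.coeff (Finsupp.cons m 0) (shearEquiv c hc g) :=
          MvPowerSeries.coeff_coeff_finSuccEquiv _
        rw [h2, ← mem_nonunits_iff, ← IsLocalRing.mem_maximalIdeal, ← PadicInt.ker_toZMod] at h1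
        exact hm h1)
    exact ⟨e.symm q, hqP, (MulEquiv.prime_iff e.symm.toMulEquiv).2 hq⟩

/-! ### Lifting annihilators -/

/-- If `s : S` kills `M / XM`, the determinant trick yields an annihilator of `M` whose constant
coefficient is a power of `s`. -/
theorem exists_annihilator_constantCoeff_eq_pow {S : Type*} [CommRing S] {M : Type*}
    [AddCommGroup M] [Module (PowerSeries S) M] [Module.Finite (PowerSeries S) M] (s : S)
    (hs : ∀ m : M ⧸ (Ideal.span {(PowerSeries.X : PowerSeries S)} •
      (⊤ : Submodule (PowerSeries S) M)), s • m = 0) :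
    ∃ (F : PowerSeries S) (n : ℕ), (∀ m : M, F • m = 0) ∧ PowerSeries.constantCoeff F = s ^ n := by
  obtain ⟨P, hmon, -, hP, hann⟩ :=
    LinearMap.exists_monic_and_natDegree_eq_and_coeff_mem_pow_and_aeval_eq_zero (PowerSeries S)
      (algebraMap (PowerSeries S) (Module.End (PowerSeries S) M) (PowerSeries.C s))
      (Ideal.span {PowerSeries.X}) (by
        rintro _ ⟨m, rfl⟩
        have := hs (Submodule.Quotient.mk m)
        rw [← Submodule.Quotient.mk_eq_zero]
        exact this)
  refine ⟨P.eval (PowerSeries.C s), P.natDegree, fun m ↦ ?_, ?_⟩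
  · rw [Polynomial.aeval_algebraMap_apply_eq_algebraMap_eval] at hann
    exact congr($hann m)
  · have hmap : P.map PowerSeries.constantCoeff = Polynomial.X ^ P.natDegree := by
      ext k
      rw [Polynomial.coeff_map, Polynomial.coeff_X_pow]
      split_ifs with hk
      · rw [hk, hmon.coeff_natDegree, map_one]
      · rcases lt_or_gt_of_ne hk with hk | hk
        · have := Ideal.pow_le_self (by omega) (hP k)
          rwa [Ideal.mem_span_singleton, PowerSeries.X_dvd_iff] at this
        · rw [Polynomial.coeff_eq_zero_of_natDegree_lt hk, map_zero]
    rw [← Polynomial.eval₂_at_apply, PowerSeries.constantCoeff_C, ← Polynomial.eval_map, hmap]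
    simp

/-- Perrin-Riou's lemma: if `M` is a finitely generated torsion module over
`R = ℤ_p[[T_1, …, T_d, X]] = S[[X]]` with `S = ℤ_p[[T_1, …, T_d]]`, and `M/XM` is
pseudo-null over `S`, then `M` is pseudo-null over `R`. -/
theorem isPseudoNull_of_isPseudoNull_quot_X_smul
    (p : ℕ) [Fact p.Prime] (d : ℕ) (hd : 1 ≤ d)
    (M : Type*) [AddCommGroup M]
    [Module (PowerSeries (MvPowerSeries (Fin d) ℤ_[p])) M]
    [Module.Finite (PowerSeries (MvPowerSeries (Fin d) ℤ_[p])) M]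
    (htors : Module.IsTorsion (PowerSeries (MvPowerSeries (Fin d) ℤ_[p])) M)
    (hquot : IsPseudoNull (MvPowerSeries (Fin d) ℤ_[p])
      (M ⧸ (Ideal.span {(PowerSeries.X : PowerSeries (MvPowerSeries (Fin d) ℤ_[p]))} •
        (⊤ : Submodule (PowerSeries (MvPowerSeries (Fin d) ℤ_[p])) M)))) :
    IsPseudoNull (PowerSeries (MvPowerSeries (Fin d) ℤ_[p])) M := by
  have := uniqueFactorizationMonoid_mvPowerSeries_padicInt p d
  obtain ⟨f, g, hf0, hg0, hf, hg, hfg⟩ := hquot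
  obtain ⟨F, a, hF, hFa⟩ := exists_annihilator_constantCoeff_eq_pow f hf
  obtain ⟨G, b, hG, hGb⟩ := exists_annihilator_constantCoeff_eq_pow g hg
  refine ⟨F, G, ?_, ?_, hF, hG, fun h hhF hhG ↦ ?_⟩
  · rintro rfl
    exact pow_ne_zero a hf0 (by rw [← hFa, map_zero])
  · rintro rfl
    exact pow_ne_zero b hg0 (by rw [← hGb, map_zero])
  · rw [PowerSeries.isUnit_iff_constantCoeff]
    exact (hfg.pow (m := a) (n := b)) (hFa ▸ map_dvd PowerSeries.constantCoeff hhF)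
      (hGb ▸ map_dvd PowerSeries.constantCoeff hhG)
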